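/- Let C be an [n,k] linear code over F_q. Then C is chained if and only if its associated matroid M_C is chained. -/

import Mathlib

open Finset
open scoped Classical

noncomputable section

/-- The rank in the matroid `M_C`: `r(X)` is the rank of the column submatrix `H_X`. -/
def colRank {F : Type*} [Field F] {m n : ℕ} (H : Matrix (Fin m) (Fin n) F)
    (X : Finset (Fin n)) : ℕ :=
  Module.finrank F (Submodule.span F ((fun j i => H i j) '' (X : Set (Fin n))))

/-- The nullity function of the matroid `M_C`: `n(X) = |X| - r(X)`. -/
def nulC {F : Type*} [Field F] {m n : ℕ} (H : Matrix (Fin m) (Fin n) F)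
    (X : Finset (Fin n)) : ℕ :=
  X.card - colRank H X

/-- The support of a word. -/
def supp {F : Type*} [Field F] {n : ℕ} (c : Fin n → F) : Finset (Fin n) :=
  Finset.univ.filter (fun i => c i ≠ 0)

/-- The support of a subcode. -/
def suppD {F : Type*} [Field F] {n : ℕ} (D : Submodule F (Fin n → F)) : Finset (Fin n) :=
  Finset.univ.filter (fun i => ∃ c ∈ D, c i ≠ 0)

/-- The weight of a subcode: the cardinality of its support. -/
def wt {F : Type*} [Field F] {n : ℕ} (D : Submodule F (Fin n → F)) : ℕ := (suppD D).card

/-- The subcode `C(X) = {c ∈ C : Supp(c) ⊆ X}`. -/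
def codeRestrict {F : Type*} [Field F] {n : ℕ} (C : Submodule F (Fin n → F))
    (X : Finset (Fin n)) : Submodule F (Fin n → F) where
  carrier := {c | c ∈ C ∧ ∀ i ∉ X, c i = 0}
  add_mem' := by
    rintro a b ⟨ha, ha0⟩ ⟨hb, hb0⟩
    exact ⟨C.add_mem ha hb, fun i hi => by simp [Pi.add_apply, ha0 i hi, hb0 i hi]⟩
  zero_mem' := ⟨C.zero_mem, fun i _ => rfl⟩
  smul_mem' := by
    rintro r a ⟨ha, ha0⟩
    exact ⟨C.smul_mem r ha, fun i hi => by simp [Pi.smul_apply, ha0 i hi]⟩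

/-- The code defined by the parity check matrix `H`: `C = {x : H x = 0}`. -/
def codeOf {F : Type*} [Field F] {m n : ℕ} (H : Matrix (Fin m) (Fin n) F) :
    Submodule F (Fin n → F) :=
  LinearMap.ker H.mulVecLin

/-- The `r`-th generalized Hamming weight of a code `C`. -/
def dC {F : Type*} [Field F] {n : ℕ} (C : Submodule F (Fin n → F)) (r : ℕ) : ℕ :=
  sInf {w | ∃ D : Submodule F (Fin n → F), D ≤ C ∧ Module.finrank F D = r ∧ wt D = w}

/-- `D` computes `d_r(C)`: `D ⊆ C`, `dim D = r` and `wt(D) = d_r(C)`. -/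
def Computes {F : Type*} [Field F] {n : ℕ} (C : Submodule F (Fin n → F)) (r : ℕ)
    (D : Submodule F (Fin n → F)) : Prop :=
  D ≤ C ∧ Module.finrank F D = r ∧ wt D = dC C r

end
noncomputable section

/-- The code `C` is chained: there is a chain `D_1 ⊆ ⋯ ⊆ D_k` of subcodes with
`dim D_i = i` and `wt(D_i) = d_i(C)`. -/
def ChainedCode {F : Type*} [Field F] {n : ℕ} (C : Submodule F (Fin n → F)) (k : ℕ) : Prop :=
  ∃ D : Fin k → Submodule F (Fin n → F), Monotone D ∧
    ∀ i : Fin k, D i ≤ C ∧ Module.finrank F (D i) = (i : ℕ) + 1 ∧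
      wt (D i) = dC C ((i : ℕ) + 1)

/-- The generalized Hamming weights of the matroid `M_C`. -/
def dM {F : Type*} [Field F] {m n : ℕ} (H : Matrix (Fin m) (Fin n) F) (i : ℕ) : ℕ :=
  sInf {c | ∃ X, nulC H X = i ∧ X.card = c}

/-- The matroid `M_C` is chained: there is a chain `σ_1 ⊆ ⋯ ⊆ σ_k` with `σ_i ∈ N_i` and
`|σ_i| = d_i(M_C)`. -/
def ChainedMatroidC {F : Type*} [Field F] {m n : ℕ} (H : Matrix (Fin m) (Fin n) F)
    (k : ℕ) : Prop :=
  ∃ σ : Fin k → Finset (Fin n), Monotone σ ∧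
    ∀ i : Fin k, (nulC H (σ i) = (i : ℕ) + 1 ∧
        ∀ Y ⊆ σ i, nulC H Y = (i : ℕ) + 1 → Y = σ i) ∧
      (σ i).card = dM H ((i : ℕ) + 1)

theorem colRank_mono {F : Type*} [Field F] {m n : ℕ} (H : Matrix (Fin m) (Fin n) F)
    {X Y : Finset (Fin n)} (h : X ⊆ Y) : colRank H X ≤ colRank H Y := by
  unfold colRank
  apply Submodule.finrank_mono
  apply Submodule.span_mono
  apply Set.image_mono
  exact_mod_cast h

theorem mem_codeRestrict' {F : Type*} [Field F] {n : ℕ} (C : Submodule F (Fin n → F))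
    (X : Finset (Fin n)) (c : Fin n → F) :
    c ∈ codeRestrict C X ↔ c ∈ C ∧ ∀ i ∉ X, c i = 0 := Iff.rfl

theorem nulC_eq {F : Type*} [Field F] {m n : ℕ} (H : Matrix (Fin m) (Fin n) F)
    (X : Finset (Fin n)) : nulC H X = Module.finrank F (codeRestrict (codeOf H) X) := by
  let f : (X → F) →ₗ[F] (Fin m → F) :=
    Fintype.linearCombination F (fun j : X => fun i => H i j)
  let g : (X → F) →ₗ[F] (Fin n → F) :=
    { toFun := fun v j => if h : j ∈ X then v ⟨j, h⟩ else 0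
      map_add' := by intro a b; ext j; by_cases h : j ∈ X <;> simp [h]
      map_smul' := by intro a b; ext j; by_cases h : j ∈ X <;> simp [h] }
  have hg : Function.Injective g := by
    intro a b hab
    ext ⟨j, hj⟩
    have := congrFun hab j
    simpa [g, hj] using this
  have hfg : ∀ v, H.mulVecLin (g v) = f v := by
    intro v
    ext i
    simp only [f, g, Matrix.mulVecLin_apply, Matrix.mulVec, dotProduct,
      Fintype.linearCombination_apply, Finset.sum_apply, Pi.smul_apply, smul_eq_mul,
      LinearMap.coe_mk, AddHom.coe_mk]
    rw [← Finset.sum_subset (Finset.subset_univ X), ← Finset.sum_coe_sort X]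
    · apply Finset.sum_congr rfl
      rintro ⟨j, hj⟩ _
      simp [hj, mul_comm]
    · intro j _ hj
      simp [hj]
  have hr : Module.finrank F (LinearMap.range f) = colRank H X := by
    unfold colRank
    rw [Fintype.range_linearCombination]
    congr 3
    all_goals (try rw [Set.image_eq_range]; rfl)
  have hk : (LinearMap.ker f).map g = codeRestrict (codeOf H) X := by
    ext c
    rw [mem_codeRestrict', Submodule.mem_map]
    constructor
    · rintro ⟨v, hv, rfl⟩
      refine ⟨?_, fun i hi => by simp [g, hi]⟩
      rw [codeOf, LinearMap.mem_ker, hfg]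
      exact hv
    · rintro ⟨hc, h0⟩
      have hgc : g (fun j => c j) = c := by
        ext j
        by_cases hj : j ∈ X
        · simp [g, hj]
        · simp [g, hj, h0 j hj]
      refine ⟨fun j => c j, ?_, hgc⟩
      rw [LinearMap.mem_ker, ← hfg, hgc]
      exact hc
  have h1 := LinearMap.finrank_range_add_finrank_ker f
  have h2 : Module.finrank F ((LinearMap.ker f).map g) = Module.finrank F (LinearMap.ker f) :=
    (Submodule.equivMapOfInjective g hg _).finrank_eq.symm
  rw [Module.finrank_fintype_fun_eq_card, Fintype.card_coe, hr] at h1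
  rw [hk] at h2
  unfold nulC
  omega

theorem exists_sub_nulC {F : Type*} [Field F] {m n : ℕ} (H : Matrix (Fin m) (Fin n) F) (r : ℕ)
    (X : Finset (Fin n)) (h : r ≤ nulC H X) : ∃ Y ⊆ X, nulC H Y = r := by
  induction X using Finset.strongInduction with
  | H X ih =>
    by_cases he : nulC H X = r
    · exact ⟨X, Finset.Subset.refl X, he⟩
    have hne : X.Nonempty := by
      rw [Finset.nonempty_iff_ne_empty]
      rintro rfl
      simp [nulC] at h he
      omega
    obtain ⟨x, hx⟩ := hne
    have hm := colRank_mono H (Finset.erase_subset x X)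
    have hc := Finset.card_erase_add_one hx
    obtain ⟨Y, hY, hn⟩ := ih (X.erase x) (Finset.erase_ssubset hx) (by
      unfold nulC at *
      omega)
    exact ⟨Y, hY.trans (Finset.erase_subset x X), hn⟩

theorem le_nulC_suppD {F : Type*} [Field F] {m n : ℕ} (H : Matrix (Fin m) (Fin n) F)
    (D : Submodule F (Fin n → F)) (hD : D ≤ codeOf H) :
    Module.finrank F D ≤ nulC H (suppD D) := by
  rw [nulC_eq]
  apply Submodule.finrank_mono
  intro c hc
  refine ⟨hD hc, fun i hi => ?_⟩
  by_contra h
  exact hi (by simpa [suppD] using ⟨c, hc, h⟩)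

theorem suppD_codeRestrict {F : Type*} [Field F] {n : ℕ} (C : Submodule F (Fin n → F))
    (X : Finset (Fin n)) : suppD (codeRestrict C X) ⊆ X := by
  intro i hi
  simp only [suppD, Finset.mem_filter] at hi
  obtain ⟨_, c, hc, hne⟩ := hi
  by_contra h
  exact hne (hc.2 i h)

theorem codeRestrict_le {F : Type*} [Field F] {n : ℕ} (C : Submodule F (Fin n → F))
    (X : Finset (Fin n)) : codeRestrict C X ≤ C := fun _ hc => hc.1

theorem dC_le {F : Type*} [Field F] {n : ℕ} (C D : Submodule F (Fin n → F)) (hD : D ≤ C) :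
    dC C (Module.finrank F D) ≤ wt D := Nat.sInf_le ⟨D, hD, rfl, rfl⟩

theorem dM_le {F : Type*} [Field F] {m n : ℕ} (H : Matrix (Fin m) (Fin n) F)
    (X : Finset (Fin n)) : dM H (nulC H X) ≤ X.card := Nat.sInf_le ⟨X, rfl, rfl⟩

theorem dC_eq_dM {F : Type*} [Field F] {m n : ℕ} (H : Matrix (Fin m) (Fin n) F) (r : ℕ) :
    dC (codeOf H) r = dM H r := by
  have key : ∀ X, nulC H X = r → dC (codeOf H) r ≤ X.card := by
    intro X hX
    have := dC_le (codeOf H) _ (codeRestrict_le (codeOf H) X)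
    rw [← nulC_eq, hX] at this
    exact this.trans (Finset.card_le_card (suppD_codeRestrict _ _))
  have key2 : ∀ D, D ≤ codeOf H → Module.finrank F D = r →
      ∃ X ⊆ suppD D, nulC H X = r := fun D hD hr =>
    exists_sub_nulC H r _ (hr ▸ le_nulC_suppD H D hD)
  by_cases hne : ∃ X, nulC H X = r
  · obtain ⟨X, hX⟩ := hne
    apply le_antisymm
    · obtain ⟨Y, hY, hc⟩ := Nat.sInf_mem
        (s := {c | ∃ X, nulC H X = r ∧ X.card = c}) ⟨_, X, hX, rfl⟩
      unfold dM
      rw [← hc]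
      exact key Y hY
    · obtain ⟨D, hD, hr, hw⟩ := Nat.sInf_mem
        (s := {w | ∃ D : Submodule F (Fin n → F),
          D ≤ codeOf H ∧ Module.finrank F D = r ∧ wt D = w})
        ⟨_, codeRestrict (codeOf H) X, codeRestrict_le _ _, by rw [← nulC_eq, hX], rfl⟩
      unfold dC
      rw [← hw]
      obtain ⟨Y, hY, hn⟩ := key2 D hD hr
      exact (hn ▸ dM_le H Y).trans (Finset.card_le_card hY)
  · have e1 : {c | ∃ X, nulC H X = r ∧ X.card = c} = ∅ := by
      ext c
      simp only [Set.mem_ofPred_eq, Set.mem_empty_iff_false, iff_false]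
      rintro ⟨X, hX, _⟩
      exact hne ⟨X, hX⟩
    have e2 : {w | ∃ D : Submodule F (Fin n → F),
          D ≤ codeOf H ∧ Module.finrank F D = r ∧ wt D = w} = ∅ := by
      ext c
      simp only [Set.mem_ofPred_eq, Set.mem_empty_iff_false, iff_false]
      rintro ⟨D, hD, hr, _⟩
      obtain ⟨X, _, hX⟩ := key2 D hD hr
      exact hne ⟨X, hX⟩
    rw [dC, dM, e1, e2]

/-- an `[n,k]` linear code `C` is chained if and only if its associated matroid
`M_C` is chained. -/
theorem statement16 {F : Type*} [Field F] [Fintype F] {m k n : ℕ} (hmk : m + k = n)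
    (H : Matrix (Fin m) (Fin n) F) (hH : H.rank = m) :
    ChainedCode (codeOf H) k ↔ ChainedMatroidC H k := by
  constructor
  · rintro ⟨D, hmono, hD⟩
    have hcard : ∀ i, ∀ Y ⊆ suppD (D i), nulC H Y = (i : ℕ) + 1 → Y = suppD (D i) := by
      intro i Y hY hn
      apply Finset.eq_of_subset_of_card_le hY
      have h1 := dM_le H Y
      rw [hn, ← dC_eq_dM, ← (hD i).2.2] at h1
      exact h1
    refine ⟨fun i => suppD (D i), ?_, fun i => ⟨⟨?_, hcard i⟩, ?_⟩⟩
    · intro i j hij x hx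
      simp only [suppD, Finset.mem_filter] at hx ⊢
      obtain ⟨hu, c, hc, hne⟩ := hx
      exact ⟨hu, c, hmono hij hc, hne⟩
    · obtain ⟨Y, hY, hn⟩ := exists_sub_nulC H ((i : ℕ) + 1) (suppD (D i))
        ((hD i).2.1 ▸ le_nulC_suppD H (D i) (hD i).1)
      beta_reduce
      rw [← hcard i Y hY hn]
      exact hn
    · rw [← dC_eq_dM]
      exact (hD i).2.2
  · rintro ⟨σ, hmono, hσ⟩
    have hr : ∀ i, Module.finrank F (codeRestrict (codeOf H) (σ i)) = (i : ℕ) + 1 := by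
      intro i
      rw [← nulC_eq]
      exact (hσ i).1.1
    refine ⟨fun i => codeRestrict (codeOf H) (σ i), ?_,
      fun i => ⟨codeRestrict_le _ _, hr i, le_antisymm ?_ ?_⟩⟩
    · intro i j hij c hc
      exact ⟨hc.1, fun x hx => hc.2 x (fun h => hx (hmono hij h))⟩
    · rw [dC_eq_dM, ← (hσ i).2]
      exact Finset.card_le_card (suppD_codeRestrict _ _)
    · have := dC_le (codeOf H) _ (codeRestrict_le (codeOf H) (σ i))
      rw [hr i] at this
      exact this

end
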